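/- arXiv:2505.22684 — 2 statements merged into one kernel-verified Lean document; each statement's English description precedes it below -/
import Mathlib

section
/- (Nonnegativity part of Theorem 1.) For any community partition 𝒞 of V, the fairness-modularity satisfies Q^P ≥ 0. -/
open Finset

theorem sum_sum_mul_sq_le_sum_sum_sq_mul_sum_sq {ι κ R : Type*} [CommSemiring R] [LinearOrder R]
    [IsStrictOrderedRing R] [ExistsAddOfLE R] (s : Finset ι) (t : Finset κ)
    (a : ι → κ → R) (d : κ → R) :
    ∑ u ∈ s, (∑ w ∈ t, a u w * d w) ^ 2 ≤ (∑ u ∈ s, ∑ w ∈ t, a u w ^ 2) * ∑ w ∈ t, d w ^ 2 := by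
  rw [sum_mul]
  exact sum_le_sum fun u _ => sum_mul_sq_le_sq_mul_sq t (a u) d

section FairnessModularity

variable {V ι κ : Type*} [Fintype ι] [Fintype κ]

/-- The normalizing quantity `m^P` of a family `P` of protected groups. The groups may overlap and
need not cover `V`. -/
noncomputable def fairnessMass (P : κ → Finset V) : ℝ :=
  (1 / 2) * ∑ w, (#(P w) : ℝ) ^ 2

/-- The fairness-modularity `Q^P` of a family `C` of communities with respect to a family `P` of
protected groups; neither family has to be a partition. Division by zero gives the value `0` when
every group is empty. -/
noncomputable def fairnessModularity [DecidableEq V] (C : ι → Finset V) (P : κ → Finset V) : ℝ :=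
  (1 / (2 * fairnessMass P)) *
    ((∑ u, ∑ w, (#(C u ∩ P w) : ℝ) ^ 2)
      - (1 / (2 * fairnessMass P)) * ∑ u, (∑ w, (#(C u ∩ P w) : ℝ) * (#(P w) : ℝ)) ^ 2)

theorem two_mul_fairnessMass (P : κ → Finset V) :
    2 * fairnessMass P = ∑ w, (#(P w) : ℝ) ^ 2 := by
  rw [fairnessMass]
  ring

theorem two_mul_fairnessMass_pos {P : κ → Finset V} (hP : ∃ w, (P w).Nonempty) :
    0 < 2 * fairnessMass P := by
  obtain ⟨w, hw⟩ := hP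
  have card_pos : (0 : ℝ) < #(P w) := Nat.cast_pos.mpr hw.card_pos
  rw [two_mul_fairnessMass]
  exact sum_pos' (fun _ _ => sq_nonneg _) ⟨w, mem_univ w, pow_pos card_pos 2⟩

theorem fairness_modularity_nonneg_general [DecidableEq V] (C : ι → Finset V) {P : κ → Finset V}
    (hP : ∃ w, (P w).Nonempty) : 0 ≤ fairnessModularity C P := by
  have mass_pos : 0 < 2 * fairnessMass P := two_mul_fairnessMass_pos hP
  refine mul_nonneg (one_div_nonneg.mpr mass_pos.le) (sub_nonneg.mpr ?_)
  rw [one_div_mul_eq_div, div_le_iff₀ mass_pos, two_mul_fairnessMass]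
  exact sum_sum_mul_sq_le_sum_sum_sq_mul_sum_sq univ univ _ _

end FairnessModularity

/-- (Nonnegativity part of Theorem 1.) For any community partition 𝒞 of V, the
fairness-modularity satisfies Q^P ≥ 0. -/
theorem fairness_modularity_nonneg
    {V : Type*} [Fintype V] [DecidableEq V]
    (n : ℕ) (hn : Fintype.card V = n) (hn1 : 1 ≤ n)
    (k r : ℕ) (C : Fin k → Finset V) (P : Fin r → Finset V)
    (hCne : ∀ u, (C u).Nonempty)
    (hCdisj : ∀ u u', u ≠ u' → Disjoint (C u) (C u'))
    (hCunion : ∀ v : V, ∃ u, v ∈ C u)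
    (hPne : ∀ w, (P w).Nonempty)
    (hPdisj : ∀ w w', w ≠ w' → Disjoint (P w) (P w'))
    (hPunion : ∀ v : V, ∃ w, v ∈ P w)
    (mP : ℝ) (hmP : mP = (1/2) * ∑ w, ((P w).card : ℝ)^2)
    (QP : ℝ)
    (hQP : QP = (1/(2*mP)) *
      ((∑ u, ∑ w, ((C u ∩ P w).card : ℝ)^2)
        - (1/(2*mP)) * ∑ u, (∑ w, ((C u ∩ P w).card : ℝ) * ((P w).card : ℝ))^2)) :
    0 ≤ QP := by
  obtain ⟨v⟩ : Nonempty V := Fintype.card_pos_iff.mp (hn ▸ hn1)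
  obtain ⟨w, hw⟩ := hPunion v
  rw [hQP, hmP]
  exact fairness_modularity_nonneg_general C ⟨w, v, hw⟩
end

section
/- (Modularity increment under merging two communities, as used by the Fast Newman update.) Let A be the symmetric 0/1 adjacency matrix of an undirected graph on n vertices with degrees k_i = Σ_j A_{ij} and 2m = Σ_i k_i, m > 0. For a partition 𝒞 of the vertices, define Q(𝒞) = (1/(2m))·Σ_{i,j : i,j in the same community} [A_{ij} − k_i k_j/(2m)]. Let 𝒞' be obtained from 𝒞 by merging two distinct communities C_s and C_t into C_s ∪ C_t. Then Q(𝒞') − Q(𝒞) = 2·(e_{st} − a_s a_t), where e_{st} = (1/(2m))·Σ_{i ∈ C_s} Σ_{j ∈ C_t} A_{ij}, a_s = (1/(2m))·Σ_{i ∈ C_s} k_i and a_t = (1/(2m))·Σ_{i ∈ C_t} k_i. -/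
open Finset

/-!
`Q` is, up to the factor `1 / (2m)`, the sum of the diagonal blocks of the modularity matrix
`B i j = A i j - k i * k j / (2m)`. Merging `C s` and `C t` adds to this sum exactly the blocks
`C s × C t` and `C t × C s`, which have equal sums because `B` is symmetric. The rank-one term of
`B` factors over a block, so each of the two contributes `e_st - a_s * a_t`.
-/

section BlockSum

variable {V M : Type*} [AddCommMonoid M] {B : Matrix V V M}

/-- The sum of the entries of `B` with row in `S` and column in `T`. For an adjacency matrix it is
the total weight between `S` and `T`, where an edge with both ends in `S ∩ T` counts twice. -/
def blockSum (B : Matrix V V M) (S T : Finset V) : M :=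
  ∑ i ∈ S, ∑ j ∈ T, B i j

theorem blockSum_comm (hB : B.IsSymm) (S T : Finset V) : blockSum B S T = blockSum B T S :=
  sum_comm.trans <| sum_congr rfl fun j _ => sum_congr rfl fun i _ => hB.apply j i

theorem blockSum_union_self [DecidableEq V] (hB : B.IsSymm) {S T : Finset V} (hST : Disjoint S T) :
    blockSum B (S ∪ T) (S ∪ T) = blockSum B S S + blockSum B T T + 2 • blockSum B S T := by
  calc
    blockSum B (S ∪ T) (S ∪ T)
      = blockSum B S S + blockSum B S T + (blockSum B T S + blockSum B T T) := by
        simp only [blockSum, sum_union hST, sum_add_distrib]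
    _ = blockSum B S S + blockSum B T T + 2 • blockSum B S T := by
        rw [blockSum_comm hB T S]
        abel

end BlockSum

section MergeCommunities

variable {V ι M : Type*} [DecidableEq V] [DecidableEq ι]

/-- The family obtained from the communities `C` by merging `C s` and `C t`. The union takes the
index `s`, and the index `t` is removed. -/
def mergeCommunities (C : ι → Finset V) (s t : ι) : {u // u ≠ t} → Finset V :=
  fun u => Function.update C s (C s ∪ C t) u

variable [Fintype ι] [AddCommMonoid M] {s t : ι}

theorem sum_univ_eq_sum_filter_ne_ne_add (hst : s ≠ t) (f : ι → M) :
    ∑ u, f u = ∑ u with u ≠ s ∧ u ≠ t, f u + (f s + f t) := by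
  have hcompl : ({u | u ≠ s ∧ u ≠ t} : Finset ι) = {s, t}ᶜ := by ext; simp
  rw [hcompl, ← sum_pair hst, sum_compl_add_sum]

theorem sum_mergeCommunities (hst : s ≠ t) (C : ι → Finset V) (f : Finset V → M) :
    ∑ u, f (mergeCommunities C s t u) =
      ∑ u with u ≠ s ∧ u ≠ t, f (C u) + f (C s ∪ C t) := by
  have hinsert : ({u | u ≠ t} : Finset ι) = insert s ({u | u ≠ s ∧ u ≠ t} : Finset ι) := by
    ext u
    by_cases hu : u = s <;> simp [hu, hst]
  calc
    ∑ u, f (mergeCommunities C s t u)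
      = ∑ u with u ≠ t, f (Function.update C s (C s ∪ C t) u) := by
        rw [← sum_subtype_eq_sum_filter, subtype_univ]
        rfl
    _ = f (C s ∪ C t) + ∑ u with u ≠ s ∧ u ≠ t, f (Function.update C s (C s ∪ C t) u) := by
        rw [hinsert, sum_insert (by simp), Function.update_self]
    _ = ∑ u with u ≠ s ∧ u ≠ t, f (C u) + f (C s ∪ C t) := by
        rw [add_comm]
        congr 1
        refine sum_congr rfl fun u hu => ?_
        rw [Function.update_of_ne (mem_filter.mp hu).2.1]

theorem sum_blockSum_mergeCommunities {B : Matrix V V M} (hB : B.IsSymm) {C : ι → Finset V}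
    (hst : s ≠ t) (hdisj : Disjoint (C s) (C t)) :
    ∑ u, blockSum B (mergeCommunities C s t u) (mergeCommunities C s t u) =
      ∑ u, blockSum B (C u) (C u) + 2 • blockSum B (C s) (C t) := by
  rw [sum_mergeCommunities hst C fun S => blockSum B S S, blockSum_union_self hB hdisj,
    sum_univ_eq_sum_filter_ne_ne_add hst]
  abel

end MergeCommunities

section Modularity

variable {V ι K : Type*} [Fintype V] [Field K] {A : Matrix V V K}

/-- The strength (weighted degree) `k i` of the vertex `i` in the graph with weighted adjacency
matrix `A`. -/
def strength (A : Matrix V V K) (i : V) : K := ∑ j, A i j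

/-- The total strength of the graph, written `2m` in the definition of the modularity. -/
def totalStrength (A : Matrix V V K) : K := ∑ i, strength A i

/-- Newman's modularity matrix, the difference between `A` and its expectation `k i * k j / (2m)`
in the configuration model. -/
def modularityMatrix (A : Matrix V V K) : Matrix V V K :=
  Matrix.of fun i j => A i j - strength A i * strength A j / totalStrength A

/-- The modularity of a family `C` of communities, a partition being encoded as the indexed family
of its blocks. -/
def modularity [Fintype ι] (A : Matrix V V K) (C : ι → Finset V) : K :=
  1 / totalStrength A * ∑ u, blockSum (modularityMatrix A) (C u) (C u)

/-- Newman's `e_st`, for the communities `S` and `T`: the share of the total strength carried by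
the edges from `S` to `T`. -/
def edgeFraction (A : Matrix V V K) (S T : Finset V) : K :=
  1 / totalStrength A * blockSum A S T

/-- Newman's `a_s`, for the community `S`: the share of the total strength carried by the vertices
of `S`. -/
def strengthFraction (A : Matrix V V K) (S : Finset V) : K :=
  1 / totalStrength A * ∑ i ∈ S, strength A i

theorem isSymm_modularityMatrix (hA : A.IsSymm) : (modularityMatrix A).IsSymm :=
  Matrix.IsSymm.ext fun i j => by
    simp only [modularityMatrix, Matrix.of_apply, hA.apply i j, mul_comm (strength A j)]

theorem blockSum_modularityMatrix (A : Matrix V V K) (S T : Finset V) :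
    blockSum (modularityMatrix A) S T =
      blockSum A S T - (∑ i ∈ S, strength A i) * (∑ j ∈ T, strength A j) / totalStrength A := by
  simp only [blockSum, modularityMatrix, Matrix.of_apply, sum_sub_distrib, sum_mul_sum, sum_div]

theorem one_div_totalStrength_mul_blockSum_modularityMatrix (A : Matrix V V K) (S T : Finset V) :
    1 / totalStrength A * blockSum (modularityMatrix A) S T =
      edgeFraction A S T - strengthFraction A S * strengthFraction A T := by
  rw [blockSum_modularityMatrix, edgeFraction, strengthFraction, strengthFraction]
  ring

theorem modularity_mergeCommunities [DecidableEq V] [Fintype ι] [DecidableEq ι] {s t : ι}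
    (hst : s ≠ t) (A : Matrix V V K) (C : ι → Finset V) :
    modularity A (mergeCommunities C s t) =
      1 / totalStrength A * (∑ u with u ≠ s ∧ u ≠ t, blockSum (modularityMatrix A) (C u) (C u) +
        blockSum (modularityMatrix A) (C s ∪ C t) (C s ∪ C t)) := by
  rw [modularity, sum_mergeCommunities hst C fun S => blockSum (modularityMatrix A) S S]

theorem modularity_increment_merge_general [DecidableEq V] [Fintype ι] [DecidableEq ι]
    (hA : A.IsSymm) (_hA0 : totalStrength A ≠ 0) {C : ι → Finset V} {s t : ι} (hst : s ≠ t)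
    (hdisj : Disjoint (C s) (C t)) :
    modularity A (mergeCommunities C s t) - modularity A C =
      2 * (edgeFraction A (C s) (C t) - strengthFraction A (C s) * strengthFraction A (C t)) := by
  rw [modularity, modularity,
    sum_blockSum_mergeCommunities (isSymm_modularityMatrix hA) hst hdisj,
    ← one_div_totalStrength_mul_blockSum_modularityMatrix]
  ring

end Modularity

/-- (Modularity increment under merging two communities, as used by the Fast Newman
update.) Merging distinct communities C_s and C_t changes the modularity by
Q(𝒞') − Q(𝒞) = 2·(e_{st} − a_s a_t). -/
theorem modularity_increment_merge
    {V : Type*} [Fintype V] [DecidableEq V]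
    (A : Matrix V V ℝ)
    (hA01 : ∀ i j, A i j = 0 ∨ A i j = 1)
    (hAsymm : ∀ i j, A i j = A j i)
    (deg : V → ℝ) (hdeg : ∀ i, deg i = ∑ j, A i j)
    (m : ℝ) (hm : 2 * m = ∑ i, deg i) (hmpos : 0 < m)
    (k : ℕ) (C : Fin k → Finset V)
    (hCne : ∀ u, (C u).Nonempty)
    (hCdisj : ∀ u u', u ≠ u' → Disjoint (C u) (C u'))
    (hCunion : ∀ v : V, ∃ u, v ∈ C u)
    (s t : Fin k) (hst : s ≠ t)
    (Q Q' eST aS aT : ℝ)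
    (hQ : Q = (1/(2*m)) *
      ∑ u, ∑ i ∈ C u, ∑ j ∈ C u, (A i j - deg i * deg j / (2*m)))
    (hQ' : Q' = (1/(2*m)) *
      ((∑ u ∈ Finset.univ.filter (fun u => u ≠ s ∧ u ≠ t),
          ∑ i ∈ C u, ∑ j ∈ C u, (A i j - deg i * deg j / (2*m)))
        + ∑ i ∈ C s ∪ C t, ∑ j ∈ C s ∪ C t, (A i j - deg i * deg j / (2*m))))
    (heST : eST = (1/(2*m)) * ∑ i ∈ C s, ∑ j ∈ C t, A i j)
    (haS : aS = (1/(2*m)) * ∑ i ∈ C s, deg i)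
    (haT : aT = (1/(2*m)) * ∑ i ∈ C t, deg i) :
    Q' - Q = 2 * (eST - aS * aT) := by
  obtain rfl : deg = strength A := funext hdeg
  have hA : A.IsSymm := Matrix.IsSymm.ext fun i j => hAsymm j i
  have hW : 2 * m = totalStrength A := hm
  rw [hQ, hQ', heST, haS, haT, hW]
  exact modularity_mergeCommunities hst A C ▸
    modularity_increment_merge_general hA (hW ▸ by positivity) hst (hCdisj s t hst)
end
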